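/- Let Σ ∈ R^{r×r} be diagonal with positive diagonal entries, let 0 < η ≤ 1, and let Φ, Ψ ∈ R^{r×r} be invertible matrices such that ΦΨᵀ is symmetric positive definite. Define Φ' = (1−η) Φ + η Σ Ψ^{−ᵀ} and Ψ' = (1−η) Ψ + η Σ Φ^{−ᵀ} (one modified ScaledGD step in the reduced coordinates). Then Φ' (Ψ')ᵀ = (1−η)² ΦΨᵀ + 2η(1−η) Σ + η² Σ (ΦΨᵀ)⁻¹ Σ, and this matrix is again symmetric positive definite. -/

import Mathlib

open Matrix BigOperators

/-! Write `P = Φ Ψᴴ`. Factoring `Ψ⁻ᴴ` out of `Φ'` on the right and `Φ⁻¹` out of `Ψ'ᴴ` on the left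
leaves the same matrix `M = (1 - η) P + η Σ` both times, so the new product is `M P⁻¹ M`.
Expanding it gives the recursion; and since `M` is a convex combination of positive definite
matrices, `M P⁻¹ M` is a congruence of `P⁻¹` by an invertible Hermitian matrix. -/

theorem convex_setOf_posDef {n R 𝕜 : Type*} [Ring R] [PartialOrder R] [StarRing R] [AddLeftMono R]
    [CommSemiring 𝕜] [PartialOrder 𝕜] [StarRing 𝕜] [StarOrderedRing 𝕜] [Algebra 𝕜 R]
    [StarModule 𝕜 R] [PosSMulStrictMono 𝕜 R] :
    Convex 𝕜 {A : Matrix n n R | A.PosDef} :=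
  convex_iff_forall_pos.2 fun _A hA _B hB _a _b ha hb _ => (hA.smul ha).add (hB.smul hb)

theorem posDef_mul_inv_mul_self {n K : Type*} [Fintype n] [DecidableEq n] [Field K]
    [PartialOrder K] [StarRing K] {M P : Matrix n n K} (hP : P.PosDef)
    (hM : M.IsHermitian) (hM_unit : IsUnit M) : (M * P⁻¹ * M).PosDef := by
  simpa only [star_eq_conjTranspose, hM.eq] using
    (IsUnit.posDef_star_right_conjugate_iff hM_unit).2 hP.inv

theorem smul_add_smul_mul_inv_mul_self {n R : Type*} [Fintype n] [DecidableEq n] [CommRing R]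
    {P : Matrix n n R} (hP : IsUnit P) (S : Matrix n n R) (a b : R) :
    (a • P + b • S) * P⁻¹ * (a • P + b • S) =
      a ^ 2 • P + (2 * b * a) • S + b ^ 2 • (S * P⁻¹ * S) := by
  have hdet : IsUnit P.det := (isUnit_iff_isUnit_det P).1 hP
  simp only [add_mul, mul_add, smul_mul_assoc, mul_smul_comm, mul_nonsing_inv _ hdet, one_mul,
    nonsing_inv_mul_cancel_right _ _ hdet]
  module

/-- The modified ScaledGD update of the factor `Φ` in reduced coordinates, with partner `Ψ`,
target `S` (`Σ` in the paper) and step size `η`; the partner is updated by `scaledGDStep η S Ψ Φ`.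
The adjoint takes the place of the transpose, with which it agrees over the reals. -/
noncomputable def scaledGDStep {n R : Type*} [Fintype n] [DecidableEq n] [CommRing R] [StarRing R]
    (η : R) (S Φ Ψ : Matrix n n R) : Matrix n n R :=
  (1 - η) • Φ + η • (S * Ψᴴ⁻¹)

namespace scaledGDStep

variable {n R : Type*} [Fintype n] [DecidableEq n] [CommRing R] [StarRing R]
  {η : R} {S Φ Ψ : Matrix n n R}

theorem eq_mul_inv (η : R) (S Φ : Matrix n n R) (hΨ : IsUnit Ψ) :
    scaledGDStep η S Φ Ψ = ((1 - η) • (Φ * Ψᴴ) + η • S) * Ψᴴ⁻¹ := by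
  have hdet : IsUnit Ψᴴ.det := (isUnit_iff_isUnit_det _).1 hΨ.star
  simp only [scaledGDStep, add_mul, smul_mul_assoc, mul_nonsing_inv_cancel_right _ _ hdet]

theorem conjTranspose_eq_inv_mul (hη : IsSelfAdjoint η) (hS : S.IsHermitian) (hΦ : IsUnit Φ)
    (Ψ : Matrix n n R) :
    (scaledGDStep η S Ψ Φ)ᴴ = Φ⁻¹ * ((1 - η) • (Φ * Ψᴴ) + η • S) := by
  simp only [eq_mul_inv η S Ψ hΦ, conjTranspose_mul, conjTranspose_add, conjTranspose_smul,
    conjTranspose_nonsing_inv, conjTranspose_conjTranspose, star_sub, star_one, hη.star_eq, hS.eq]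

theorem mul_conjTranspose (hη : IsSelfAdjoint η) (hS : S.IsHermitian) (hΦ : IsUnit Φ)
    (hΨ : IsUnit Ψ) :
    scaledGDStep η S Φ Ψ * (scaledGDStep η S Ψ Φ)ᴴ =
      ((1 - η) • (Φ * Ψᴴ) + η • S) * (Φ * Ψᴴ)⁻¹ * ((1 - η) • (Φ * Ψᴴ) + η • S) := by
  rw [eq_mul_inv η S Φ hΨ, conjTranspose_eq_inv_mul hη hS hΦ Ψ, Matrix.mul_inv_rev]
  simp only [mul_assoc]

end scaledGDStep

theorem stmt_12_general {n K : Type*} [Fintype n] [DecidableEq n] [Field K] [PartialOrder K]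
    [StarRing K] [StarOrderedRing K] {η : K} {S Φ Ψ : Matrix n n K}
    (hη0 : 0 ≤ η) (hη1 : η ≤ 1) (hS : S.PosDef) (hP : (Φ * Ψᴴ).PosDef) :
    scaledGDStep η S Φ Ψ * (scaledGDStep η S Ψ Φ)ᴴ =
        (1 - η) ^ 2 • (Φ * Ψᴴ) + (2 * η * (1 - η)) • S + η ^ 2 • (S * (Φ * Ψᴴ)⁻¹ * S) ∧
      (scaledGDStep η S Φ Ψ * (scaledGDStep η S Ψ Φ)ᴴ).PosDef := by
  have ⟨hΦ, hΨ⟩ : IsUnit Φ ∧ IsUnit Ψᴴ := IsUnit.mul_iff.1 hP.isUnit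
  have hM : ((1 - η) • (Φ * Ψᴴ) + η • S).PosDef :=
    convex_setOf_posDef hP hS (sub_nonneg.2 hη1) hη0 (sub_add_cancel 1 η)
  rw [scaledGDStep.mul_conjTranspose (.of_nonneg hη0) hS.isHermitian hΦ (isUnit_star.1 hΨ)]
  exact ⟨smul_add_smul_mul_inv_mul_self hP.isUnit S _ _,
    posDef_mul_inv_mul_self hP hM.isHermitian hM.isUnit⟩

/-- One modified ScaledGD step in reduced coordinates for the asymmetric
exact-parametrized setting: with `Φ' = (1−η)Φ + ηΣΨ^{−ᵀ}` and `Ψ' = (1−η)Ψ + ηΣΦ^{−ᵀ}`,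
one has `Φ'(Ψ')ᵀ = (1−η)²ΦΨᵀ + 2η(1−η)Σ + η²Σ(ΦΨᵀ)⁻¹Σ`, and this matrix is again
symmetric positive definite. -/
theorem stmt_12
    (r : ℕ)
    (d : Fin r → ℝ) (hd : ∀ i, 0 < d i)
    (η : ℝ) (hη0 : 0 < η) (hη1 : η ≤ 1)
    (Φ Ψ : Matrix (Fin r) (Fin r) ℝ)
    (hΦ : IsUnit Φ) (hΨ : IsUnit Ψ)
    (hPD : (Φ * Ψᵀ).PosDef)
    (Φ' Ψ' : Matrix (Fin r) (Fin r) ℝ)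
    (hΦ' : Φ' = (1 - η) • Φ + η • (Matrix.diagonal d * (Ψᵀ)⁻¹))
    (hΨ' : Ψ' = (1 - η) • Ψ + η • (Matrix.diagonal d * (Φᵀ)⁻¹)) :
    Φ' * Ψ'ᵀ
        = (1 - η) ^ 2 • (Φ * Ψᵀ) + (2 * η * (1 - η)) • Matrix.diagonal d
          + η ^ 2 • (Matrix.diagonal d * (Φ * Ψᵀ)⁻¹ * Matrix.diagonal d) ∧
    (Φ' * Ψ'ᵀ).PosDef := by
  subst hΦ' hΨ'
  simpa only [scaledGDStep, conjTranspose_eq_transpose_of_trivial] using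
    stmt_12_general hη0.le hη1 (PosDef.diagonal hd) hPD
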